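/- The open set condition holds for {S_i}_{i=1}^m if and only if S_σ ≠ S_τ (as maps ℝ → ℝ) for all distinct finite words σ ≠ τ over {1,…,m}. -/

import Mathlib

open Polynomial Filter

noncomputable section

namespace PVOSC

variable {m : ℕ}

/-- `λ⁻¹` is a Pisot (P.V.) number: an algebraic integer `> 1` all of whose
Galois conjugates other than itself have complex absolute value `< 1`. -/
def IsPisot (θ : ℝ) : Prop :=
  1 < θ ∧ IsIntegral ℤ θ ∧
    ∀ z : ℂ, aeval z (minpoly ℤ θ) = 0 → z ≠ (θ : ℂ) → ‖z‖ < 1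

/-- `p_σ` for a finite word `σ`. -/
def wordP (p : Fin m → ℕ) (σ : List (Fin m)) : ℕ := (σ.map p).sum

/-- The contracting similitude `S_i(x) = λ^{p_i} x + b_i`. -/
def Smap (lam : ℝ) (p : Fin m → ℕ) (b : Fin m → ℝ) (i : Fin m) : ℝ → ℝ :=
  fun x => lam ^ p i * x + b i

/-- `S_σ = S_{i₁} ∘ ⋯ ∘ S_{i_k}` for `σ = i₁ ⋯ i_k`. -/
def SW (lam : ℝ) (p : Fin m → ℕ) (b : Fin m → ℝ) (σ : List (Fin m)) : ℝ → ℝ :=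
  σ.foldr (fun i f => Smap lam p b i ∘ f) id

/-- `b_σ`, the translation part of `S_σ`. -/
def wordB (lam : ℝ) (p : Fin m → ℕ) (b : Fin m → ℝ) (σ : List (Fin m)) : ℝ :=
  SW lam p b σ 0

/-- `B = {0, b₁, …, b_m}`. -/
def Bset (b : Fin m → ℝ) : Set ℝ := insert 0 (Set.range b)

/-- `B − B`. -/
def BB (b : Fin m → ℝ) : Set ℝ := {x | ∃ u ∈ Bset b, ∃ v ∈ Bset b, x = u - v}

/-- `max_i |b_i|`. -/
def bmax (b : Fin m → ℝ) : ℝ := ⨆ i, |b i|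

/-- The set `𝒞`. -/
def Cset (lam : ℝ) (b : Fin m → ℝ) (T : ℕ) : Set ℝ :=
  {x | |x| ≤ (1 + lam ^ (1 - (T : ℤ))) * bmax b / (1 - lam) ∧
    ∃ R : ℝ[X], (∀ n, R.coeff n ∈ BB b) ∧ lam ^ (2 - (T : ℤ)) * x = R.eval lam⁻¹}

/-- The vertex set `Ξ = {n ∈ ℤ : |n| ≤ T−1} × 𝒞`. -/
def Xi (lam : ℝ) (b : Fin m → ℝ) (T : ℕ) : Set (ℤ × ℝ) :=
  {v | |v.1| ≤ (T : ℤ) - 1 ∧ v.2 ∈ Cset lam b T}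

/-- The open set condition. -/
def OSC (lam : ℝ) (p : Fin m → ℕ) (b : Fin m → ℝ) : Prop :=
  ∃ U : Set ℝ, U.Nonempty ∧ IsOpen U ∧ (⋃ i, Smap lam p b i '' U) ⊆ U ∧
    ∀ i j : Fin m, i ≠ j → Smap lam p b i '' U ∩ Smap lam p b j '' U = ∅

/-- The strong separation condition for the attractor `E`. -/
def SSC (lam : ℝ) (p : Fin m → ℕ) (b : Fin m → ℝ) (E : Set ℝ) : Prop :=
  ∀ i j : Fin m, i ≠ j → Smap lam p b i '' E ∩ Smap lam p b j '' E = ∅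

/-- Group law on `ℤ × ℝ`: `(p₁,c₁)·(p₂,c₂) = (p₁+p₂, λ^{p₁} c₂ + c₁)`. -/
def gmul (lam : ℝ) (u v : ℤ × ℝ) : ℤ × ℝ := (u.1 + v.1, lam ^ u.1 * v.2 + u.2)

/-- Inverse for the group law: `(p,c)⁻¹ = (−p, −λ^{−p} c)`. -/
def ginv (lam : ℝ) (u : ℤ × ℝ) : ℤ × ℝ := (-u.1, -(lam ^ (-u.1) * u.2))

/-- The group element `(p_σ, b_σ)` associated to a finite word `σ`. -/
def elem (lam : ℝ) (p : Fin m → ℕ) (b : Fin m → ℝ) (σ : List (Fin m)) : ℤ × ℝ :=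
  ((wordP p σ : ℤ), wordB lam p b σ)

/-- The sequence `(q_k, c_k)` with the recursive structure w.r.t. `({α_k}, {β_k})`:
`recSeq … k = (q_{k+1}, c_{k+1})`, i.e. index `k` corresponds to `(q_{k+1}, c_{k+1})`. -/
def recSeq (lam : ℝ) (p : Fin m → ℕ) (b : Fin m → ℝ) (α β : ℕ → List (Fin m)) : ℕ → ℤ × ℝ
  | 0 => gmul lam (ginv lam (elem lam p b (β 0))) (elem lam p b (α 0))
  | (k+1) => gmul lam (ginv lam (elem lam p b (β (k+1))))
      (gmul lam (recSeq lam p b α β k) (elem lam p b (α (k+1))))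

/-- The edge relation of the directed graph `G` on `Ξ`. -/
def edge (lam : ℝ) (p : Fin m → ℕ) (b : Fin m → ℝ) (T : ℕ) (u v : ℤ × ℝ) : Prop :=
  u ∈ Xi lam b T ∧ v ∈ Xi lam b T ∧
    ∃ α β : List (Fin m), 1 ≤ wordP p α ∧ wordP p α ≤ 2 * T - 1 ∧
      1 ≤ wordP p β ∧ wordP p β ≤ 2 * T - 1 ∧
      v.1 = (wordP p α : ℤ) + u.1 - (wordP p β : ℤ) ∧
      v.2 = lam ^ (-(wordP p β : ℤ)) * u.2 + lam ^ (u.1 - (wordP p β : ℤ)) * wordB lam p b α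
        - lam ^ (-(wordP p β : ℤ)) * wordB lam p b β

/-- `Λ = Ξ ∩ {(p_j − p_i, λ^{−p_i}(b_j − b_i)) : i ≠ j}`. -/
def Lam (lam : ℝ) (p : Fin m → ℕ) (b : Fin m → ℝ) (T : ℕ) : Set (ℤ × ℝ) :=
  Xi lam b T ∩ {v | ∃ i j : Fin m, i ≠ j ∧
    v = ((p j : ℤ) - (p i : ℤ), lam ^ (-(p i : ℤ)) * (b j - b i))}

/-- The length-`k` prefix of an infinite word `ω`. -/
def prefixList (ω : ℕ → Fin m) (k : ℕ) : List (Fin m) := (List.range k).map ω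

/-!
Under the open set condition, `S_σ` and `S_τ` map a point of the open set to different points as
soon as the first letters of `σ` and `τ` differ, so `σ ↦ S_σ` is injective.

Conversely, call `τ` a neighbour of `σ` when `S_τ` and `S_σ` have comparable ratios and overlapping
images of a fixed invariant interval. The maps `S_σ⁻¹ ∘ S_τ` have finitely many ratios, and their
translation parts are, up to a fixed power of `λ`, bounded values at `λ⁻¹` of integer polynomials
with bounded coefficients. As `λ⁻¹` is Pisot, all conjugates of such a value are bounded too, so
there are only finitely many of them (Garsia). Injectivity of `σ ↦ S_σ` then bounds the number of
neighbours of a word uniformly. Every neighbour `τ` of `σ` gives the neighbour `ρτ` of `ρσ`, so if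
`σ` has the largest number of neighbours, all neighbours of `ρσ` start with `ρ`. Hence the union
over `ρ` of the images of the interval under `S_{ρσ}` witnesses the open set condition.
-/

/-! ### Words and their similitudes -/

section Words

variable {lam : ℝ} {p : Fin m → ℕ} {b : Fin m → ℝ}

lemma wordP_cons (i : Fin m) (σ : List (Fin m)) : wordP p (i :: σ) = p i + wordP p σ := by
  simp [wordP]

lemma wordP_append (σ τ : List (Fin m)) : wordP p (σ ++ τ) = wordP p σ + wordP p τ := by
  simp [wordP]

lemma wordP_pos (hp : ∀ i, 1 ≤ p i) {σ : List (Fin m)} (hσ : σ ≠ []) : 0 < wordP p σ := by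
  obtain ⟨i, σ, rfl⟩ := List.exists_cons_of_ne_nil hσ
  rw [wordP_cons]
  exact Nat.add_pos_left (hp i) _

lemma SW_cons (i : Fin m) (σ : List (Fin m)) :
    SW lam p b (i :: σ) = Smap lam p b i ∘ SW lam p b σ := rfl

lemma SW_append (σ τ : List (Fin m)) :
    SW lam p b (σ ++ τ) = SW lam p b σ ∘ SW lam p b τ := by
  induction σ with
  | nil => rfl
  | cons i σ ih => rw [List.cons_append, SW_cons, SW_cons, ih, Function.comp_assoc]

lemma SW_apply (σ : List (Fin m)) (x : ℝ) :
    SW lam p b σ x = lam ^ wordP p σ * x + wordB lam p b σ := by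
  induction σ generalizing x with
  | nil => simp [SW, wordP, wordB]
  | cons i σ ih =>
    have hB : wordB lam p b (i :: σ) = lam ^ p i * wordB lam p b σ + b i := rfl
    rw [SW_cons, Function.comp_apply, Smap, ih, wordP_cons, hB]
    ring

lemma wordB_append (σ τ : List (Fin m)) :
    wordB lam p b (σ ++ τ) = lam ^ wordP p σ * wordB lam p b τ + wordB lam p b σ := by
  rw [wordB, SW_append, Function.comp_apply, SW_apply σ, wordB, wordB]

lemma wordB_singleton (i : Fin m) : wordB lam p b [i] = b i := by
  simp [wordB, SW, Smap]

lemma mapsTo_SW {V : Set ℝ} (hV : ∀ i, Set.MapsTo (Smap lam p b i) V V) (σ : List (Fin m)) :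
    Set.MapsTo (SW lam p b σ) V V := by
  induction σ with
  | nil => exact Set.mapsTo_id V
  | cons i σ ih => exact (hV i).comp ih

lemma isOpenMap_SW (hlam : lam ≠ 0) (σ : List (Fin m)) : IsOpenMap (SW lam p b σ) := by
  have hSW : SW lam p b σ =
      affineHomeomorph (lam ^ wordP p σ) (wordB lam p b σ) (pow_ne_zero _ hlam) :=
    funext (SW_apply σ)
  rw [hSW]
  exact Homeomorph.isOpenMap _

lemma Smap_injective (hlam : lam ≠ 0) (i : Fin m) : Function.Injective (Smap lam p b i) :=
  (add_left_injective (b i)).comp (mul_right_injective₀ (pow_ne_zero (p i) hlam))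

lemma SW_ne_id (hlam0 : 0 < lam) (hlam1 : lam < 1) (hp : ∀ i, 1 ≤ p i) {σ : List (Fin m)}
    (hσ : σ ≠ []) : SW lam p b σ ≠ id := by
  intro hid
  have hfix (x : ℝ) : lam ^ wordP p σ * x + wordB lam p b σ = x := by
    rw [← SW_apply, hid, id]
  have hlt : lam ^ wordP p σ < 1 := pow_lt_one₀ hlam0.le hlam1 (wordP_pos hp hσ).ne'
  linarith [hfix 0, hfix 1]

lemma injective_SW_iff (hlam0 : 0 < lam) (hlam1 : lam < 1) (hp : ∀ i, 1 ≤ p i) :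
    Function.Injective (SW lam p b) ↔
      ∀ σ τ : List (Fin m), σ ≠ [] → τ ≠ [] → σ ≠ τ → SW lam p b σ ≠ SW lam p b τ := by
  refine ⟨fun hinj σ τ _ _ hne => hinj.ne hne, fun h σ τ heq => ?_⟩
  by_contra hne
  rcases eq_or_ne σ [] with rfl | hσ
  · exact SW_ne_id hlam0 hlam1 hp (Ne.symm hne) heq.symm
  rcases eq_or_ne τ [] with rfl | hτ
  · exact SW_ne_id hlam0 hlam1 hp hσ heq
  exact h σ τ hσ hτ hne heq

theorem OSC.injective_SW (hlam0 : 0 < lam) (hlam1 : lam < 1) (hp : ∀ i, 1 ≤ p i)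
    (hOSC : OSC lam p b) : Function.Injective (SW lam p b) := by
  obtain ⟨U, ⟨x, hx⟩, -, hsub, hdisj⟩ := hOSC
  have hinv (σ : List (Fin m)) : SW lam p b σ x ∈ U :=
    mapsTo_SW (fun i _ hy => hsub (Set.mem_iUnion.2 ⟨i, Set.mem_image_of_mem _ hy⟩)) σ hx
  intro σ
  induction σ with
  | nil =>
    intro τ heq
    by_contra hne
    exact SW_ne_id hlam0 hlam1 hp (Ne.symm hne) heq.symm
  | cons i σ ih =>
    rintro (_ | ⟨j, τ⟩) heq
    · exact absurd heq (SW_ne_id hlam0 hlam1 hp (List.cons_ne_nil i σ))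
    obtain rfl : i = j := by
      by_contra hij
      refine Set.eq_empty_iff_forall_notMem.1 (hdisj i j hij) (SW lam p b (i :: σ) x)
        ⟨⟨_, hinv σ, rfl⟩, ?_⟩
      rw [heq]
      exact ⟨_, hinv τ, rfl⟩
    rw [ih ((Smap_injective hlam0.ne' i).comp_left heq)]

lemma exists_prefix_wordP_mem_Icc {T : ℕ} (hT : ∀ i, p i ≤ T) (w : List (Fin m)) {n : ℕ}
    (hn : n ≤ wordP p w) : ∃ τ s, w = τ ++ s ∧ wordP p τ ∈ Set.Icc n (n + T) := by
  induction w generalizing n with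
  | nil => exact ⟨[], [], rfl, hn, Nat.zero_le _⟩
  | cons i w ih =>
    rw [wordP_cons] at hn
    rcases Nat.eq_zero_or_pos n with rfl | hpos
    · exact ⟨[], i :: w, rfl, Nat.zero_le _, Nat.zero_le _⟩
    · obtain ⟨τ, s, rfl, hlow, hupp⟩ := ih (n := n - p i) (by omega)
      have hTi := hT i
      by_cases hni : n ≤ p i
      · have hsingle : wordP p [i] = p i := by simp [wordP]
        exact ⟨[i], τ ++ s, rfl, by omega, by omega⟩
      · refine ⟨i :: τ, s, rfl, ?_, ?_⟩ <;> rw [wordP_cons] <;> omega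

lemma exists_pos_forall_mapsTo_ball (hlam0 : 0 < lam) (hlam1 : lam < 1) (hp : ∀ i, 1 ≤ p i) :
    ∃ M > 0, ∀ i, Set.MapsTo (Smap lam p b i) (Metric.ball 0 M) (Metric.ball 0 M) := by
  set B : ℝ := ∑ i, |b i|
  have hB0 : 0 ≤ B := Finset.sum_nonneg fun _ _ => abs_nonneg _
  have hgap : 0 < 1 - lam := sub_pos.2 hlam1
  refine ⟨(B + 1) / (1 - lam), div_pos (add_pos_of_nonneg_of_pos hB0 one_pos) hgap,
    fun i x hx => ?_⟩
  set M : ℝ := (B + 1) / (1 - lam)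
  have hM : (1 - lam) * M = B + 1 := mul_div_cancel₀ _ hgap.ne'
  have hbi : |b i| ≤ B :=
    Finset.single_le_sum (f := fun i => |b i|) (fun _ _ => abs_nonneg _) (Finset.mem_univ i)
  have hpow : lam ^ p i ≤ lam :=
    pow_le_of_le_one hlam0.le hlam1.le (Nat.one_le_iff_ne_zero.1 (hp i))
  rw [mem_ball_zero_iff, Real.norm_eq_abs] at hx ⊢
  calc |lam ^ p i * x + b i| ≤ |lam ^ p i * x| + |b i| := abs_add_le _ _
    _ = lam ^ p i * |x| + |b i| := by rw [abs_mul, abs_of_pos (pow_pos hlam0 _)]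
    _ ≤ lam * M + B := by gcongr
    _ < M := by linarith

end Words

/-! ### Neighbouring words -/

section Neighbors

/-- The words `τ` whose exponent `p_τ` lies in the window `[p_σ, p_σ + T]` and for which `S_τ` and
`S_σ` have overlapping images of `V`. Counting them measures how much the pieces of the iterated
function system at one scale overlap. -/
def neighbors (lam : ℝ) (p : Fin m → ℕ) (b : Fin m → ℝ) (T : ℕ) (V : Set ℝ)
    (σ : List (Fin m)) : Set (List (Fin m)) :=
  {τ | wordP p τ ∈ Set.Icc (wordP p σ) (wordP p σ + T) ∧
    (SW lam p b τ '' V ∩ SW lam p b σ '' V).Nonempty}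

/-- A word `σ` is saturated if prefixing it by any word `ρ` creates no neighbours besides the words
`ρτ` with `τ` a neighbour of `σ`. -/
def IsSaturated (lam : ℝ) (p : Fin m → ℕ) (b : Fin m → ℝ) (T : ℕ) (V : Set ℝ)
    (σ : List (Fin m)) : Prop :=
  ∀ ρ, neighbors lam p b T V (ρ ++ σ) ⊆ (ρ ++ ·) '' neighbors lam p b T V σ

/-- The translation part of the similitude `S_σ⁻¹ ∘ S_τ`. -/
def relTranslation (lam : ℝ) (p : Fin m → ℕ) (b : Fin m → ℝ) (σ τ : List (Fin m)) : ℝ :=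
  (lam ^ wordP p σ)⁻¹ * (wordB lam p b τ - wordB lam p b σ)

variable {lam : ℝ} {p : Fin m → ℕ} {b : Fin m → ℝ} {T : ℕ} {V : Set ℝ}

lemma image_append_neighbors_subset (ρ σ : List (Fin m)) :
    (ρ ++ ·) '' neighbors lam p b T V σ ⊆ neighbors lam p b T V (ρ ++ σ) := by
  rintro _ ⟨τ, ⟨⟨hlow, hupp⟩, hmeet⟩, rfl⟩
  refine ⟨⟨?_, ?_⟩, ?_⟩
  · simpa only [wordP_append] using Nat.add_le_add_left hlow _
  · simpa only [wordP_append, add_assoc] using Nat.add_le_add_left hupp _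
  · simp only [SW_append, Set.image_comp]
    exact (hmeet.image _).mono (Set.image_inter_subset _ _ _)

lemma exists_isSaturated {N : ℕ}
    (hN : ∀ σ, (neighbors lam p b T V σ).Finite ∧ (neighbors lam p b T V σ).ncard ≤ N) :
    ∃ σ, IsSaturated lam p b T V σ := by
  have hbdd : BddAbove (Set.range fun σ => (neighbors lam p b T V σ).ncard) :=
    ⟨N, Set.forall_mem_range.2 fun σ => (hN σ).2⟩
  obtain ⟨σ, hσ⟩ := Nat.sSup_mem (Set.range_nonempty _) hbdd
  refine ⟨σ, fun ρ => (Set.eq_of_subset_of_ncard_le (image_append_neighbors_subset ρ σ) ?_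
    (hN _).1).superset⟩
  rw [Set.ncard_image_of_injective _ (List.append_right_injective ρ)]
  exact (le_csSup hbdd (Set.mem_range_self _)).trans hσ.ge

lemma IsSaturated.SW_ne_SW {σ : List (Fin m)} (hσ : IsSaturated lam p b T V σ)
    (hT : ∀ i, p i ≤ T) (hV : ∀ i, Set.MapsTo (Smap lam p b i) V V) {i j : Fin m} (hij : i ≠ j)
    {ρ w : List (Fin m)} (hle : wordP p (i :: ρ ++ σ) ≤ wordP p (j :: w)) {x y : ℝ}
    (hx : x ∈ V) (hy : y ∈ V) : SW lam p b (i :: ρ ++ σ) x ≠ SW lam p b (j :: w) y := by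
  intro heq
  obtain ⟨τ, s, hτs, hwindow⟩ := exists_prefix_wordP_mem_Icc hT (j :: w) hle
  have hτ : τ ∈ neighbors lam p b T V (i :: ρ ++ σ) := by
    refine ⟨hwindow, _, ⟨SW lam p b s y, mapsTo_SW hV s hy, ?_⟩, ⟨x, hx, heq⟩⟩
    rw [hτs, SW_append, Function.comp_apply]
  obtain ⟨τ', -, rfl⟩ := hσ (i :: ρ) hτ
  exact hij (List.cons.inj hτs).1.symm

theorem IsSaturated.osc {σ : List (Fin m)} (hσ : IsSaturated lam p b T V σ) (hlam : lam ≠ 0)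
    (hT : ∀ i, p i ≤ T) (hVne : V.Nonempty) (hVo : IsOpen V)
    (hV : ∀ i, Set.MapsTo (Smap lam p b i) V V) : OSC lam p b := by
  refine ⟨⋃ ρ, SW lam p b (ρ ++ σ) '' V, ?_, ?_, ?_, fun i j hij => ?_⟩
  · exact Set.nonempty_iUnion.2 ⟨[], hVne.image _⟩
  · exact isOpen_iUnion fun ρ => isOpenMap_SW hlam _ _ hVo
  · simp only [Set.iUnion_subset_iff, Set.image_subset_iff]
    intro i ρ x hx
    exact Set.mem_iUnion.2 ⟨i :: ρ, x, hx, rfl⟩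
  · rw [← Set.disjoint_iff_inter_eq_empty, Set.disjoint_left]
    rintro _ ⟨_, hu, rfl⟩ ⟨_, hv, huv⟩
    obtain ⟨ρ, x, hx, rfl⟩ := Set.mem_iUnion.1 hu
    obtain ⟨ρ', y, hy, rfl⟩ := Set.mem_iUnion.1 hv
    rcases le_total (wordP p (i :: ρ ++ σ)) (wordP p (j :: ρ' ++ σ)) with hle | hle
    · exact hσ.SW_ne_SW hT hV hij hle hx hy huv.symm
    · exact hσ.SW_ne_SW hT hV hij.symm hle hy hx huv

lemma injOn_relTranslation_neighbors (hlam : lam ≠ 0) (hinj : Function.Injective (SW lam p b))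
    (σ : List (Fin m)) :
    Set.InjOn (fun τ => (wordP p τ - wordP p σ, relTranslation lam p b σ τ))
      (neighbors lam p b T V σ) := by
  intro τ hτ τ' hτ' heq
  obtain ⟨hdiff, htrans⟩ := Prod.ext_iff.1 heq
  have hP : wordP p τ = wordP p τ' := (tsub_left_inj hτ.1.1 hτ'.1.1).1 hdiff
  have hB : wordB lam p b τ = wordB lam p b τ' :=
    sub_left_injective (mul_left_cancel₀ (inv_ne_zero (pow_ne_zero _ hlam)) htrans)
  exact hinj (funext fun x => by rw [SW_apply, SW_apply, hP, hB])

theorem osc_of_finite_relTranslation (hlam : lam ≠ 0) (hT : ∀ i, p i ≤ T)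
    (hinj : Function.Injective (SW lam p b)) (hVne : V.Nonempty) (hVo : IsOpen V)
    (hV : ∀ i, Set.MapsTo (Smap lam p b i) V V)
    (hfin : (⋃ σ, relTranslation lam p b σ '' neighbors lam p b T V σ).Finite) :
    OSC lam p b := by
  have hGfin := (Set.finite_Iic T).prod hfin
  have hmaps (σ : List (Fin m)) :
      Set.MapsTo (fun τ => (wordP p τ - wordP p σ, relTranslation lam p b σ τ))
        (neighbors lam p b T V σ)
        (Set.Iic T ×ˢ ⋃ σ, relTranslation lam p b σ '' neighbors lam p b T V σ) :=
    fun τ hτ => ⟨tsub_le_iff_left.2 hτ.1.2, Set.mem_iUnion.2 ⟨σ, τ, hτ, rfl⟩⟩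
  have hinjOn (σ : List (Fin m)) :=
    injOn_relTranslation_neighbors (T := T) (V := V) hlam hinj σ
  obtain ⟨σ, hσ⟩ := exists_isSaturated fun σ =>
    ⟨Set.Finite.of_injOn (hmaps σ) (hinjOn σ) hGfin,
      Set.ncard_le_ncard_of_injOn _ (hmaps σ) (hinjOn σ) hGfin⟩
  exact hσ.osc hlam hT hVne hVo hV

lemma abs_relTranslation_le (hlam0 : 0 < lam) (hlam1 : lam ≤ 1) {M : ℝ} {σ τ : List (Fin m)}
    (hτ : τ ∈ neighbors lam p b T (Metric.ball 0 M) σ) :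
    |relTranslation lam p b σ τ| ≤ 2 * M := by
  obtain ⟨⟨hlow, -⟩, _, ⟨x, hx, rfl⟩, y, hy, hxy⟩ := hτ
  obtain ⟨n, hn⟩ := Nat.exists_eq_add_of_le hlow
  rw [mem_ball_zero_iff, Real.norm_eq_abs] at hx hy
  have htrans : relTranslation lam p b σ τ = y - lam ^ n * x := by
    rw [SW_apply, SW_apply, hn, pow_add] at hxy
    rw [relTranslation, inv_mul_eq_iff_eq_mul₀ (pow_ne_zero _ hlam0.ne')]
    linarith
  calc |relTranslation lam p b σ τ| ≤ |y| + |lam ^ n * x| := htrans ▸ abs_sub _ _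
    _ = |y| + lam ^ n * |x| := by rw [abs_mul, abs_of_pos (pow_pos hlam0 n)]
    _ ≤ |y| + 1 * |x| := by gcongr; exact pow_le_one₀ hlam0.le hlam1
    _ ≤ 2 * M := by linarith

end Neighbors

/-! ### Polynomials with bounded integer coefficients -/

section BoundedCoeff

/-- The values at `z` of the integer polynomials, of any degree, all of whose coefficients have
absolute value at most `D`. -/
def boundedCoeffValues {A : Type*} [Ring A] (D : ℤ) (z : A) : Set A :=
  {x | ∃ R : ℤ[X], (∀ n, |R.coeff n| ≤ D) ∧ aeval z R = x}

section Ring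

variable {A A' : Type*} [Ring A] [Ring A'] {D E : ℤ} {z : A}

lemma zero_mem_boundedCoeffValues (hD : 0 ≤ D) : 0 ∈ boundedCoeffValues D z :=
  ⟨0, by simpa using hD, map_zero _⟩

lemma sub_mem_boundedCoeffValues {x y : A} (hx : x ∈ boundedCoeffValues D z)
    (hy : y ∈ boundedCoeffValues E z) : x - y ∈ boundedCoeffValues (D + E) z := by
  obtain ⟨P, hP, rfl⟩ := hx
  obtain ⟨Q, hQ, rfl⟩ := hy
  refine ⟨P - Q, fun n => ?_, map_sub _ _ _⟩
  rw [coeff_sub]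
  exact (abs_sub _ _).trans (add_le_add (hP n) (hQ n))

lemma mul_add_intCast_mem_boundedCoeffValues {x : A} (hx : x ∈ boundedCoeffValues D z) {c : ℤ}
    (hc : |c| ≤ D) : z * x + c ∈ boundedCoeffValues D z := by
  obtain ⟨R, hR, rfl⟩ := hx
  refine ⟨X * R + C c, fun n => ?_, by simp⟩
  cases n with
  | zero => simpa using hc
  | succ n =>
    rw [coeff_add, coeff_X_mul, coeff_C_succ, add_zero]
    exact hR n

lemma pow_mul_mem_boundedCoeffValues {x : A} (hx : x ∈ boundedCoeffValues D z) (k : ℕ) :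
    z ^ k * x ∈ boundedCoeffValues D z := by
  obtain ⟨R, hR, rfl⟩ := hx
  refine ⟨X ^ k * R, fun n => ?_, by simp⟩
  rw [coeff_X_pow_mul']
  split_ifs
  · exact hR _
  · simpa using (abs_nonneg _).trans (hR 0)

lemma map_aeval_int (φ : A →+* A') (R : ℤ[X]) : φ (aeval z R) = aeval (φ z) R :=
  (aeval_algHom_apply φ.toIntAlgHom z R).symm

lemma map_mem_boundedCoeffValues (φ : A →+* A') {x : A} (hx : x ∈ boundedCoeffValues D z) :
    φ x ∈ boundedCoeffValues D (φ z) := by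
  obtain ⟨R, hR, rfl⟩ := hx
  exact ⟨R, hR, (map_aeval_int φ R).symm⟩

end Ring

lemma norm_le_of_mem_boundedCoeffValues {A : Type*} [NormedRing A] [NormOneClass A] {D : ℤ}
    {z x : A} (hz : ‖z‖ < 1) (hx : x ∈ boundedCoeffValues D z) : ‖x‖ ≤ D * (1 - ‖z‖)⁻¹ := by
  obtain ⟨R, hR, rfl⟩ := hx
  have hD : (0 : ℝ) ≤ D := mod_cast (abs_nonneg _).trans (hR 0)
  have hterm (i : ℕ) : ‖R.coeff i • z ^ i‖ ≤ D * ‖z‖ ^ i := by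
    refine (norm_zsmul_le _ _).trans (mul_le_mul ?_ (norm_pow_le z i) (norm_nonneg _) hD)
    rw [Int.norm_eq_abs]
    exact_mod_cast hR i
  rw [aeval_eq_sum_range]
  calc ‖∑ i ∈ Finset.range (R.natDegree + 1), R.coeff i • z ^ i‖
      ≤ ∑ i ∈ Finset.range (R.natDegree + 1), D * ‖z‖ ^ i :=
        norm_sum_le_of_le _ fun i _ => hterm i
    _ = D * ∑ i ∈ Finset.range (R.natDegree + 1), ‖z‖ ^ i := by rw [Finset.mul_sum]
    _ ≤ D * (1 - ‖z‖)⁻¹ := by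
        gcongr
        rw [← tsum_geometric_of_lt_one (norm_nonneg z) hz]
        exact (summable_geometric_of_lt_one (norm_nonneg z) hz).sum_le_tsum _
          fun i _ => by positivity

lemma finite_boundedCoeffValues_of_norm_embedding_le {K : Type*} [Field K] [NumberField K] {α : K}
    (hα : IsIntegral ℤ α) (D : ℤ) (B : ℝ) :
    {x ∈ boundedCoeffValues D α | ∀ φ : K →+* ℂ, 1 ≤ ‖φ α‖ → ‖φ x‖ ≤ B}.Finite := by
  obtain ⟨B', hB'⟩ :=
    (Set.finite_range fun φ : K →+* ℂ => (D : ℝ) * (1 - ‖φ α‖)⁻¹).bddAbove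
  refine (NumberField.Embeddings.finite_of_norm_le K ℂ (max B B')).subset ?_
  rintro x ⟨hx, hlarge⟩
  refine ⟨?_, fun φ => ?_⟩
  · obtain ⟨R, -, rfl⟩ := hx
    exact adjoin_le_integralClosure hα (aeval_mem_adjoin_singleton ℤ α)
  · rcases lt_or_ge ‖φ α‖ 1 with hφ | hφ
    · exact le_max_of_le_right ((norm_le_of_mem_boundedCoeffValues hφ
        (map_mem_boundedCoeffValues φ hx)).trans (hB' (Set.mem_range_self φ)))
    · exact le_max_of_le_left (hlarge φ hφ)

open IntermediateField in
theorem IsPisot.finite_boundedCoeffValues_inter_closedBall {θ : ℝ} (hθ : IsPisot θ) (D : ℤ)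
    (B : ℝ) : (boundedCoeffValues D θ ∩ Metric.closedBall 0 B).Finite := by
  obtain ⟨-, hint, hconj⟩ := hθ
  have : FiniteDimensional ℚ ℚ⟮θ⟯ := adjoin.finiteDimensional hint.tower_top
  have : NumberField ℚ⟮θ⟯ := { }
  set g : ℚ⟮θ⟯ := AdjoinSimple.gen ℚ θ
  have hg : algebraMap ℚ⟮θ⟯ ℝ g = θ := AdjoinSimple.algebraMap_gen ℚ θ
  have hginj : Function.Injective (algebraMap ℚ⟮θ⟯ ℝ) := (algebraMap ℚ⟮θ⟯ ℝ).injective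
  have hgint : IsIntegral ℤ g := (isIntegral_algebraMap_iff hginj).1 (hg.symm ▸ hint)
  have hgroot : aeval g (minpoly ℤ θ) = 0 := hginj <| by
    rw [map_aeval_int, hg, minpoly.aeval, map_zero]
  have hlarge (φ : ℚ⟮θ⟯ →+* ℂ) (hφ : 1 ≤ ‖φ g‖) : φ g = θ := by
    by_contra hne
    refine hφ.not_gt (hconj _ ?_ hne)
    rw [← map_aeval_int, hgroot, map_zero]
  refine ((finite_boundedCoeffValues_of_norm_embedding_le hgint D B).image
    (algebraMap ℚ⟮θ⟯ ℝ)).subset ?_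
  rintro _ ⟨⟨R, hR, rfl⟩, hball⟩
  refine ⟨aeval g R, ⟨⟨R, hR, rfl⟩, fun φ hφ => ?_⟩, by rw [map_aeval_int, hg]⟩
  have hval : φ (aeval g R) = (aeval θ R : ℝ) := by
    rw [map_aeval_int, hlarge φ hφ]
    exact (map_aeval_int Complex.ofRealHom R).symm
  rw [hval, Complex.norm_real]
  exact mem_closedBall_zero_iff.1 hball

end BoundedCoeff

/-! ### Integer translations and Pisot ratios -/

section Pisot

variable {lam : ℝ} {p : Fin m → ℕ} {b : Fin m → ℝ} {D : ℤ}

-- The factor `lam` leaves room for one more Horner step `x ↦ lam⁻¹ * x + b i`, so that the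
-- induction needs no control of degrees.
lemma mul_inv_pow_mul_wordB_mem (hlam : lam ≠ 0) (hp : ∀ i, 1 ≤ p i) (hD : 0 ≤ D)
    (hb : ∀ i, ∃ z : ℤ, |z| ≤ D ∧ b i = z) (σ : List (Fin m)) :
    lam * (lam⁻¹ ^ wordP p σ * wordB lam p b σ) ∈ boundedCoeffValues D lam⁻¹ := by
  induction σ using List.reverseRecOn with
  | nil => simpa [wordB, SW] using zero_mem_boundedCoeffValues hD
  | append_singleton σ i ih =>
    obtain ⟨z, hzD, hz⟩ := hb i
    obtain ⟨k, hk⟩ := Nat.exists_eq_add_of_le (hp i)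
    convert pow_mul_mem_boundedCoeffValues
      (mul_add_intCast_mem_boundedCoeffValues ih hzD) k using 1
    have hP : wordP p (σ ++ [i]) = wordP p σ + (1 + k) := by simp [wordP, hk]
    rw [wordB_append, wordB_singleton, hP, hz]
    simp only [inv_pow, pow_add, pow_one]
    field_simp
    ring

lemma inv_pow_mul_wordB_mem (hlam : lam ≠ 0) (hp : ∀ i, 1 ≤ p i) (hD : 0 ≤ D)
    (hb : ∀ i, ∃ z : ℤ, |z| ≤ D ∧ b i = z) {σ : List (Fin m)} {N : ℕ} (hN : wordP p σ ≤ N) :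
    lam⁻¹ ^ N * wordB lam p b σ ∈ boundedCoeffValues D lam⁻¹ := by
  obtain ⟨k, rfl⟩ := Nat.exists_eq_add_of_le hN
  convert pow_mul_mem_boundedCoeffValues (mul_inv_pow_mul_wordB_mem hlam hp hD hb σ) (k + 1)
    using 1
  simp only [inv_pow, pow_add, pow_one]
  field_simp

lemma inv_pow_mul_relTranslation_mem (hlam : lam ≠ 0) (hp : ∀ i, 1 ≤ p i) (hD : 0 ≤ D)
    (hb : ∀ i, ∃ z : ℤ, |z| ≤ D ∧ b i = z) {T : ℕ} {σ τ : List (Fin m)}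
    (hτ : wordP p τ ≤ wordP p σ + T) :
    lam⁻¹ ^ T * relTranslation lam p b σ τ ∈ boundedCoeffValues (D + D) lam⁻¹ := by
  convert sub_mem_boundedCoeffValues (inv_pow_mul_wordB_mem hlam hp hD hb hτ)
    (inv_pow_mul_wordB_mem hlam hp hD hb (Nat.le_add_right (wordP p σ) T)) using 1
  rw [relTranslation, pow_add, ← inv_pow]
  ring

lemma exists_intCast_bound (hbZ : ∀ i, ∃ z : ℤ, b i = z) :
    ∃ D ≥ 0, ∀ i, ∃ z : ℤ, |z| ≤ D ∧ b i = z := by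
  choose z hz using hbZ
  exact ⟨∑ i, |z i|, Finset.sum_nonneg fun _ _ => abs_nonneg _, fun i => ⟨z i,
    Finset.single_le_sum (f := fun i => |z i|) (fun _ _ => abs_nonneg _) (Finset.mem_univ i),
    hz i⟩⟩

lemma IsPisot.finite_relTranslation (hlam0 : 0 < lam) (hlam1 : lam ≤ 1) (hPisot : IsPisot lam⁻¹)
    (hp : ∀ i, 1 ≤ p i) (hbZ : ∀ i, ∃ z : ℤ, b i = z) (T : ℕ) (M : ℝ) :
    (⋃ σ, relTranslation lam p b σ '' neighbors lam p b T (Metric.ball 0 M) σ).Finite := by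
  obtain ⟨D, hD, hb⟩ := exists_intCast_bound hbZ
  have hscale : 0 < lam⁻¹ ^ T := pow_pos (inv_pos.2 hlam0) T
  refine Set.Finite.of_finite_image
    ((hPisot.finite_boundedCoeffValues_inter_closedBall (D + D) (lam⁻¹ ^ T * (2 * M))).subset ?_)
    (mul_right_injective₀ hscale.ne').injOn
  simp only [Set.image_subset_iff, Set.iUnion_subset_iff]
  intro σ τ hτ
  refine ⟨inv_pow_mul_relTranslation_mem hlam0.ne' hp hD hb hτ.1.2, ?_⟩
  rw [mem_closedBall_zero_iff, norm_mul, Real.norm_of_nonneg hscale.le]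
  exact mul_le_mul_of_nonneg_left (abs_relTranslation_le hlam0 hlam1 hτ) hscale.le

theorem IsPisot.osc_of_injective_SW (hlam0 : 0 < lam) (hlam1 : lam < 1) (hPisot : IsPisot lam⁻¹)
    (hp : ∀ i, 1 ≤ p i) (hbZ : ∀ i, ∃ z : ℤ, b i = z)
    (hinj : Function.Injective (SW lam p b)) : OSC lam p b := by
  obtain ⟨M, hM, hball⟩ := exists_pos_forall_mapsTo_ball (b := b) hlam0 hlam1 hp
  have hT (i : Fin m) : p i ≤ Finset.univ.sup p := Finset.le_sup (Finset.mem_univ i)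
  exact osc_of_finite_relTranslation hlam0.ne' hT hinj (Metric.nonempty_ball.2 hM)
    Metric.isOpen_ball hball (hPisot.finite_relTranslation hlam0 hlam1.le hp hbZ _ M)

end Pisot

theorem stmt2 (lam : ℝ) (hlam0 : 0 < lam) (hlam1 : lam < 1)
    (hPisot : IsPisot lam⁻¹)
    {m : ℕ} (hm : 2 ≤ m) (p : Fin m → ℕ) (hp : ∀ i, 1 ≤ p i)
    (b : Fin m → ℝ) (hbZ : ∀ i, ∃ z : ℤ, b i = (z : ℝ)) :
    OSC lam p b ↔
      ∀ σ τ : List (Fin m), σ ≠ [] → τ ≠ [] → σ ≠ τ → SW lam p b σ ≠ SW lam p b τ := by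
  rw [← injective_SW_iff hlam0 hlam1 hp]
  exact ⟨OSC.injective_SW hlam0 hlam1 hp, hPisot.osc_of_injective_SW hlam0 hlam1 hp hbZ⟩

end PVOSC
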